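/- Let X be a Banach space having a biorthogonal system {(x_α, x_α*) : α ∈ I} ⊆ X × X* whose cardinality |I| is not a Kunen cardinal. Then there exists an equivalent norm on X which is not Ba(X_w)-measurable. -/

import Mathlib

/-- The σ-algebra on `I × I` generated by all rectangles `A ×ˢ B` with `A, B ⊆ I`. -/
def productSigma (I : Type*) : MeasurableSpace (I × I) :=
  MeasurableSpace.generateFrom {S : Set (I × I) | ∃ A B : Set I, S = A ×ˢ B}

/-- `|I|` is a Kunen cardinal. -/
def IsKunen (I : Type*) : Prop := productSigma I = ⊤

/-- The Baire σ-algebra of the weak topology of a normed space `X`. -/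
def BaW (X : Type*) [NormedAddCommGroup X] [NormedSpace ℝ X] : MeasurableSpace X :=
  ⨆ φ : X →L[ℝ] ℝ, MeasurableSpace.comap φ Real.measurableSpace

/-- `N` is an equivalent norm on `X`: a norm satisfying `c‖x‖ ≤ N x ≤ C‖x‖`
for some constants `c, C > 0`. -/
def IsEquivNorm {X : Type*} [NormedAddCommGroup X] [NormedSpace ℝ X] (N : X → ℝ) : Prop :=
  (∀ x y : X, N (x + y) ≤ N x + N y) ∧
  (∀ (a : ℝ) (x : X), N (a • x) = |a| * N x) ∧
  ∃ c C : ℝ, 0 < c ∧ 0 < C ∧ ∀ x : X, c * ‖x‖ ≤ N x ∧ N x ≤ C * ‖x‖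

lemma ps_rect {I : Type*} (A B : Set I) : @MeasurableSet _ (productSigma I) (A ×ˢ B) :=
  MeasurableSpace.measurableSet_generateFrom ⟨A, B, rfl⟩

lemma ps_fst {I : Type*} (g : I → ℝ) :
    @Measurable _ _ (productSigma I) Real.measurableSpace (fun p : I × I => g p.1) := by
  intro s _
  have h := ps_rect (g ⁻¹' s) (Set.univ : Set I)
  convert h using 1
  ext p; simp

lemma ps_snd {I : Type*} (g : I → ℝ) :
    @Measurable _ _ (productSigma I) Real.measurableSpace (fun p : I × I => g p.2) := by
  intro s _
  have h := ps_rect (Set.univ : Set I) (g ⁻¹' s)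
  convert h using 1
  ext p; simp

lemma ps_map {I X : Type*} [NormedAddCommGroup X] [NormedSpace ℝ X] (x : I → X) (a : ℝ) :
    @Measurable _ _ (productSigma I) (BaW X) (fun p : I × I => x p.1 + a • x p.2) := by
  letI := productSigma I
  unfold BaW
  rw [measurable_iff_comap_le, MeasurableSpace.comap_iSup]
  refine iSup_le fun φ => ?_
  rw [MeasurableSpace.comap_comp, ← measurable_iff_comap_le]
  have : (φ ∘ fun p : I × I => x p.1 + a • x p.2)
      = fun p => φ (x p.1) + a * φ (x p.2) := by
    ext p; simp
  rw [this]
  exact (ps_fst fun i => φ (x i)).add ((ps_snd fun i => φ (x i)).const_mul a)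

/-- If a Banach space `X` has a biorthogonal system whose cardinality is not a Kunen
cardinal, then there is an equivalent norm on `X` which is not `Ba(X_w)`-measurable. -/
theorem stmt7 (X : Type*) [NormedAddCommGroup X] [NormedSpace ℝ X] [CompleteSpace X]
    (I : Type*) (x : I → X) (xs : I → (X →L[ℝ] ℝ))
    (hbi : ∀ α β : I, (α = β → xs α (x β) = 1) ∧ (α ≠ β → xs α (x β) = 0))
    (hI : ¬ IsKunen I) :
    ∃ N : X → ℝ, IsEquivNorm N ∧
      ¬ @Measurable X ℝ (BaW X) Real.measurableSpace N := by
  letI mI := productSigma I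
  by_cases hD : MeasurableSet {p : I × I | p.1 = p.2}
  swap
  · refine ⟨fun y => ‖y‖, ⟨norm_add_le, fun a y => by simp [norm_smul], 1, 1, one_pos, one_pos,
      fun y => by simp⟩, fun hN => hD ?_⟩
    have h := (@Measurable.comp _ _ _ mI (BaW X) _ _ _ hN (ps_map x (-1)))
      (measurableSet_singleton (0 : ℝ))
    convert h using 1
    ext ⟨α, β⟩
    simp only [Set.mem_setOf_eq, Set.mem_preimage, Function.comp, Set.mem_singleton_iff,
      norm_eq_zero]
    constructor
    · rintro rfl; simp
    · intro h0
      by_contra hne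
      have h1 := congrArg (xs α) h0
      simp [(hbi α α).1 rfl, (hbi α β).2 hne] at h1
  -- now the diagonal is measurable
  obtain ⟨S, hS⟩ : ∃ S : Set (I × I), ¬ MeasurableSet S := by
    by_contra! h
    exact hI (top_le_iff.1 fun s _ => h s)
  let J : ℕ → Set I := fun k => {i | ‖x i‖ ≤ k + 1 ∧ ‖xs i‖ ≤ k + 1}
  have hSd : MeasurableSet (S ∩ {p | p.1 = p.2}) := by
    have h := (ps_rect {i | (i, i) ∈ S} (Set.univ : Set I)).inter hD
    convert h using 1
    ext ⟨α, β⟩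
    simp only [Set.mem_inter_iff, Set.mem_setOf_eq, Set.mem_prod, Set.mem_univ, and_true]
    constructor <;> (rintro ⟨h, rfl⟩; exact ⟨h, rfl⟩)
  obtain ⟨k, hk⟩ : ∃ k, ¬ MeasurableSet ((S ∩ J k ×ˢ J k) ∩ {p | p.1 ≠ p.2}) := by
    by_contra! h
    apply hS
    have h2 := (MeasurableSet.iUnion h).union hSd
    convert h2 using 1
    ext ⟨α, β⟩
    simp only [Set.mem_union, Set.mem_iUnion, Set.mem_inter_iff, Set.mem_setOf_eq, Set.mem_prod, J]
    constructor
    · intro hs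
      by_cases hab : α = β
      · exact Or.inr ⟨hs, hab⟩
      · left
        obtain ⟨n, hn⟩ := exists_nat_ge (max (max ‖x α‖ ‖xs α‖) (max ‖x β‖ ‖xs β‖))
        simp only [max_le_iff] at hn
        refine ⟨n, ⟨hs, ⟨?_, ?_⟩, ?_, ?_⟩, hab⟩ <;> linarith [hn.1.1, hn.1.2, hn.2.1, hn.2.2]
    · rintro (⟨n, ⟨h, _⟩, _⟩ | ⟨h, _⟩) <;> exact h
  set T := (S ∩ J k ×ˢ J k) ∩ {p | p.1 ≠ p.2} with hT
  have hne : Nonempty T := by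
    rw [Set.nonempty_coe_sort, Set.nonempty_iff_ne_empty]
    intro h; rw [h] at hk; exact hk MeasurableSet.empty
  have hKpos : (0 : ℝ) < k + 1 := by positivity
  let K : ℝ := k + 1
  have hK : 0 < K := hKpos
  let ψ : T → (X →L[ℝ] ℝ) := fun p => xs p.1.1 + (2 : ℝ) • xs p.1.2
  have hψ : ∀ p y, |ψ p y| ≤ 3 * K * ‖y‖ := by
    rintro ⟨⟨α, β⟩, hp⟩ y
    obtain ⟨⟨-, hα, hβ⟩, -⟩ := id hp
    have h1 : ‖xs α y‖ ≤ K * ‖y‖ := (xs α).le_of_opNorm_le hα.2 y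
    have h2 : ‖xs β y‖ ≤ K * ‖y‖ := (xs β).le_of_opNorm_le hβ.2 y
    rw [Real.norm_eq_abs] at h1 h2
    have : ψ ⟨⟨α, β⟩, hp⟩ y = xs α y + 2 * xs β y := by simp [ψ]
    rw [this]
    refine (abs_add_le _ _).trans ?_
    rw [abs_mul, abs_two]
    linarith
  have hbdd : ∀ y, BddAbove (Set.range fun p => |ψ p y|) := fun y =>
    ⟨3 * K * ‖y‖, by rintro _ ⟨p, rfl⟩; exact hψ p y⟩
  let q : X → ℝ := fun y => ⨆ p, |ψ p y|
  have hq_le : ∀ y c, (∀ p, |ψ p y| ≤ c) → q y ≤ c := fun y c h => ciSup_le h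
  have hle_q : ∀ p y, |ψ p y| ≤ q y := fun p y => le_ciSup (hbdd y) p
  let ε : ℝ := 1 / K
  have hε : 0 < ε := by positivity
  refine ⟨fun y => max (ε * ‖y‖) (q y), ⟨?_, ?_, ε, max ε (3 * K), hε, lt_max_of_lt_left hε, ?_⟩, ?_⟩
  · intro y z
    refine max_le ?_ ?_
    · have h1 := le_max_left (ε * ‖y‖) (q y)
      have h2 := le_max_left (ε * ‖z‖) (q z)
      have h3 := mul_le_mul_of_nonneg_left (norm_add_le y z) hε.le
      linarith
    · have h1 := le_max_right (ε * ‖y‖) (q y)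
      have h2 := le_max_right (ε * ‖z‖) (q z)
      refine hq_le _ _ fun p => ?_
      rw [map_add]
      have := abs_add_le (ψ p y) (ψ p z)
      linarith [hle_q p y, hle_q p z]
  · intro a y
    have : q (a • y) = |a| * q y := by
      simp only [q, Real.mul_iSup_of_nonneg (abs_nonneg a), map_smul, smul_eq_mul, abs_mul]
    simp only [this, norm_smul, Real.norm_eq_abs]
    rw [mul_max_of_nonneg _ _ (abs_nonneg a)]
    congr 1; ring
  · intro y
    refine ⟨le_max_left _ _, max_le ?_ (hq_le _ _ fun p => (hψ p y).trans ?_)⟩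
    · exact mul_le_mul_of_nonneg_right (le_max_left _ _) (norm_nonneg _)
    · exact mul_le_mul_of_nonneg_right (le_max_right _ _) (norm_nonneg _)
  · intro hN
    apply hk
    have h := (@Measurable.comp _ _ _ mI (BaW X) _ _ _ hN (ps_map x 2))
      (measurableSet_Ioi (a := (9 / 2 : ℝ)))
    have h2 := (h.inter (ps_rect (J k) (J k))).inter hD.compl
    convert h2 using 1
    ext ⟨γ, δ⟩
    have key : ∀ p : T, ψ p (x γ + (2 : ℝ) • x δ) =
        (xs p.1.1 (x γ) + 2 * xs p.1.1 (x δ)) + 2 * (xs p.1.2 (x γ) + 2 * xs p.1.2 (x δ)) := by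
      intro p; simp [ψ]
    simp only [Set.mem_inter_iff, Set.mem_preimage, Function.comp, Set.mem_Ioi, Set.mem_compl_iff,
      Set.mem_setOf_eq]
    constructor
    · intro hp
      refine ⟨⟨?_, hp.1.2⟩, hp.2⟩
      have hgd : γ ≠ δ := hp.2
      have h5 := hle_q ⟨(γ, δ), hp⟩ (x γ + (2 : ℝ) • x δ)
      rw [key] at h5
      simp only [(hbi γ γ).1 rfl, (hbi δ δ).1 rfl, (hbi γ δ).2 hgd, (hbi δ γ).2 hgd.symm] at h5
      norm_num at h5
      exact lt_max_of_lt_right (by linarith)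
    · rintro ⟨⟨hlt, hJ⟩, hgd⟩
      by_contra hnT
      have hγ : ‖x γ‖ ≤ K := hJ.1.1
      have hδ : ‖x δ‖ ≤ K := hJ.2.1
      refine absurd hlt (not_lt.2 (max_le ?_ (hq_le _ _ ?_)))
      · have h3 : ‖x γ + (2 : ℝ) • x δ‖ ≤ 3 * K := by
          refine (norm_add_le _ _).trans ?_
          rw [norm_smul, Real.norm_eq_abs, abs_two]; linarith
        have h4 := mul_le_mul_of_nonneg_left h3 hε.le
        have h5 : ε * (3 * K) = 3 := by simp only [ε]; field_simp
        linarith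
      · rintro ⟨⟨α, β⟩, hp⟩
        rw [key]
        have hab : α ≠ β := hp.2
        have hor : ¬ (α = γ ∧ β = δ) := by rintro ⟨rfl, rfl⟩; exact hnT hp
        have e : ∀ i j, xs i (x j) = 0 ∨ xs i (x j) = 1 := fun i j => by
          by_cases hij : i = j
          · exact Or.inr ((hbi i j).1 hij)
          · exact Or.inl ((hbi i j).2 hij)
        dsimp only
        by_cases h1 : α = γ
        · have h2 : β ≠ δ := fun h => hor ⟨h1, h⟩
          have h3 : β ≠ γ := fun h => hab (h1.trans h.symm)
          have h4 : α ≠ δ := fun h => hgd (h1.symm.trans h)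
          rw [(hbi _ _).1 h1, (hbi _ _).2 h2, (hbi _ _).2 h3, (hbi _ _).2 h4]; norm_num
        · rw [(hbi _ _).2 h1]
          by_cases h2 : β = δ
          · have h3 : β ≠ γ := fun h => hgd (h.symm.trans h2)
            have h4 : α ≠ δ := fun h => hab (h.trans h2.symm)
            rw [(hbi _ _).1 h2, (hbi _ _).2 h3, (hbi _ _).2 h4]; norm_num
          · rw [(hbi _ _).2 h2]
            rcases e α δ with h3 | h3 <;> rcases e β γ with h4 | h4 <;> rw [h3, h4] <;> norm_num
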